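/- (Vanishing of the acyclicity penalty on DAGs, used in the proof of Proposition 1.) Let d : ℕ and let A : Matrix (Fin d) (Fin d) ℝ be a binary adjacency matrix. If A is acyclic, then trace(Matrix.exp A) = d, i.e., h(A) = 0. -/

import Mathlib

/-- A binary adjacency matrix: every entry is 0 or 1. -/
def IsBinary {d : ℕ} (A : Matrix (Fin d) (Fin d) ℝ) : Prop :=
  ∀ i j, A i j = 0 ∨ A i j = 1

/-- The directed graph induced by `A` (edge `i → j` iff `A i j = 1`) is acyclic. -/
def IsAcyclicMat {d : ℕ} (A : Matrix (Fin d) (Fin d) ℝ) : Prop :=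
  Irreflexive (Relation.TransGen (fun i j => A i j = 1))

/-- The smooth acyclicity function `h(A) = trace (exp A) - d`. -/
noncomputable def hAcyc {d : ℕ} (A : Matrix (Fin d) (Fin d) ℝ) : ℝ :=
  Matrix.trace (NormedSpace.exp A) - d

open Classical in
/-- The penalized objective `F(A) = S(A) + λ₁·1[A ∉ DAGs] + λ₂·h(A)`. -/
noncomputable def penObj {d : ℕ} (S : Matrix (Fin d) (Fin d) ℝ → ℝ) (lam1 lam2 : ℝ)
    (A : Matrix (Fin d) (Fin d) ℝ) : ℝ :=
  S A + lam1 * (if IsAcyclicMat A then (0 : ℝ) else 1) + lam2 * hAcyc A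

/-- A nonzero entry of a positive power of `A` yields a directed path. -/
theorem transGen_of_pow_ne_zero {d : ℕ} (A : Matrix (Fin d) (Fin d) ℝ) (hA : IsBinary A)
    (n : ℕ) : ∀ i j, (A ^ (n + 1)) i j ≠ 0 → Relation.TransGen (fun i j => A i j = 1) i j := by
  induction n with
  | zero =>
    intro i j h
    rw [zero_add, pow_one] at h
    exact Relation.TransGen.single ((hA i j).resolve_left h)
  | succ n ih =>
    intro i j h
    rw [pow_succ, Matrix.mul_apply] at h
    obtain ⟨k, -, hk⟩ := Finset.exists_ne_zero_of_sum_ne_zero h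
    exact (ih i k (left_ne_zero_of_mul hk)).tail
      ((hA k j).resolve_left (right_ne_zero_of_mul hk))

theorem hasSum_exp_matrix {d : ℕ} (A : Matrix (Fin d) (Fin d) ℝ) :
    HasSum (fun n : ℕ => ((n.factorial : ℝ)⁻¹) • A ^ n) (NormedSpace.exp A) := by
  let _ : NormedRing (Matrix (Fin d) (Fin d) ℝ) := Matrix.linftyOpNormedRing
  let _ : NormedAlgebra ℝ (Matrix (Fin d) (Fin d) ℝ) := Matrix.linftyOpNormedAlgebra
  exact NormedSpace.exp_series_hasSum_exp' (𝕂 := ℝ) A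

theorem trace_exp_eq_of_acyclic (d : ℕ) (A : Matrix (Fin d) (Fin d) ℝ)
    (hA : IsBinary A) (hacyc : IsAcyclicMat A) :
    Matrix.trace (NormedSpace.exp A) = (d : ℝ) := by
  have h := (hasSum_exp_matrix A).map (Matrix.traceAddMonoidHom (Fin d) ℝ)
    (continuous_id.matrix_trace)
  have h0 : HasSum (Matrix.traceAddMonoidHom (Fin d) ℝ ∘
      fun n : ℕ => ((n.factorial : ℝ)⁻¹) • A ^ n) (d : ℝ) := by
    have := hasSum_single (f := Matrix.traceAddMonoidHom (Fin d) ℝ ∘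
      fun n : ℕ => ((n.factorial : ℝ)⁻¹) • A ^ n) 0 (by
        intro n hn
        obtain ⟨m, rfl⟩ := Nat.exists_eq_succ_of_ne_zero hn
        have ht : Matrix.trace (A ^ (m + 1)) = 0 := by
          refine Finset.sum_eq_zero fun i _ => ?_
          by_contra hne
          exact hacyc i (transGen_of_pow_ne_zero A hA m i i hne)
        simp [Matrix.trace_smul, ht])
    simpa using this
  exact h.unique h0
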